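/- Let m ≥ 2 and n > 0, let k^DE = (n/m, ..., n/m) ∈ ℝ^m be the uniform allocation vector, and for 1 ≤ t ≤ m let k^(t) ∈ ℝ^m be the allocation vector whose t-th entry is n and all other entries are 0. Then for every allocation vector k* (with k*_t ≥ 0 and ∑_{t=1}^m k*_t = n): 0 ≤ ‖k^DE − k*‖₁ ≤ (1/m)·∑_{t=1}^m ‖k^(t) − k*‖₁ = 2n − 2n/m. -/

import Mathlib

open Finset

open scoped BigOperators

/-!
The uniform allocation is the average of the single allocations, so the inequality is convexity
of the `L¹` distance to `k*`. For the value of the average, moving all the mass of `k*` to position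
`t` means removing `n - k* t` from the other positions and adding it at `t`, so
`‖k^(t) - k*‖₁ = 2 (n - k* t)`, and `∑ t, k* t = n`.
-/

section OrderedAddCommGroup

variable {ι M : Type*} [AddCommGroup M] [LinearOrder M] [IsOrderedAddMonoid M]

theorem sum_abs_single_sub [Fintype ι] [DecidableEq ι] {k : ι → M} (hk : ∀ s, 0 ≤ k s) (t : ι) :
    ∑ s, |(Pi.single t (∑ i, k i) : ι → M) s - k s| = 2 • (∑ i, k i - k t) := by
  have dist_at : |(Pi.single t (∑ i, k i) : ι → M) t - k t| = ∑ i, k i - k t := by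
    rw [Pi.single_eq_same,
      abs_of_nonneg (sub_nonneg.2 (single_le_sum (fun i _ => hk i) (mem_univ t)))]
  have dist_off :
      ∑ s ∈ univ.erase t, |(Pi.single t (∑ i, k i) : ι → M) s - k s| = ∑ i, k i - k t := by
    rw [← sum_erase_eq_sub (mem_univ t)]
    refine sum_congr rfl fun s hs => ?_
    rw [Pi.single_eq_of_ne (ne_of_mem_erase hs), zero_sub, abs_neg, abs_of_nonneg (hk s)]
  rw [← add_sum_erase _ _ (mem_univ t), dist_at, dist_off, two_nsmul]

variable [Module ℚ≥0 M] [PosSMulMono ℚ≥0 M] {τ : Type*} {T : Finset τ}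

theorem abs_expect_sub_le (hT : T.Nonempty) (f : τ → M) (a : M) :
    |(𝔼 t ∈ T, f t) - a| ≤ 𝔼 t ∈ T, |f t - a| :=
  calc |(𝔼 t ∈ T, f t) - a| = |𝔼 t ∈ T, (f t - a)| := by
        rw [expect_sub_distrib, expect_const hT]
    _ ≤ 𝔼 t ∈ T, |f t - a| := abs_expect_le T _

theorem sum_abs_expect_sub_le (hT : T.Nonempty) (S : Finset ι) (x : τ → ι → M) (y : ι → M) :
    ∑ s ∈ S, |(𝔼 t ∈ T, x t s) - y s| ≤ 𝔼 t ∈ T, ∑ s ∈ S, |x t s - y s| := by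
  rw [expect_sum_comm]
  exact sum_le_sum fun s _ => abs_expect_sub_le hT (x · s) (y s)

end OrderedAddCommGroup

section Field

variable {ι K : Type*} [Fintype ι] [DecidableEq ι] [Field K]

theorem expect_single_apply [CharZero K] (a : K) (s : ι) :
    𝔼 t, (Pi.single t a : ι → K) s = a / Fintype.card ι := by
  rw [Fintype.expect_eq_sum_div_card, Fintype.sum_pi_single]

variable [Nonempty ι] [LinearOrder K] [IsStrictOrderedRing K]

theorem sum_abs_div_card_sub_le (a : K) (k : ι → K) :
    ∑ s, |a / Fintype.card ι - k s| ≤ 𝔼 t, ∑ s, |(Pi.single t a : ι → K) s - k s| := by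
  simpa only [expect_single_apply] using
    sum_abs_expect_sub_le univ_nonempty univ (fun t => (Pi.single t a : ι → K)) k

theorem expect_sum_abs_single_sub {k : ι → K} (hk : ∀ s, 0 ≤ k s) :
    𝔼 t, ∑ s, |(Pi.single t (∑ i, k i) : ι → K) s - k s|
      = 2 * ∑ i, k i - 2 * ((∑ i, k i) / Fintype.card ι) :=
  calc 𝔼 t, ∑ s, |(Pi.single t (∑ i, k i) : ι → K) s - k s|
      = 𝔼 t, 2 * (∑ i, k i - k t) := by
        simp only [sum_abs_single_sub hk, nsmul_eq_mul, Nat.cast_ofNat]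
    _ = 2 * (∑ i, k i - 𝔼 t, k t) := by
        rw [← mul_expect, expect_sub_distrib, Fintype.expect_const]
    _ = 2 * ∑ i, k i - 2 * ((∑ i, k i) / Fintype.card ι) := by
        rw [Fintype.expect_eq_sum_div_card, mul_sub]

theorem kDE_dist_le_expected_single_dist_general {n : K} {k : ι → K}
    (hk : ∀ s, 0 ≤ k s) (hksum : ∑ s, k s = n) :
    0 ≤ ∑ s, |n / Fintype.card ι - k s| ∧
    ∑ s, |n / Fintype.card ι - k s| ≤ 𝔼 t, ∑ s, |(Pi.single t n : ι → K) s - k s| ∧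
    𝔼 t, ∑ s, |(Pi.single t n : ι → K) s - k s| = 2 * n - 2 * (n / Fintype.card ι) := by
  subst hksum
  exact ⟨sum_nonneg fun _ _ => abs_nonneg _, sum_abs_div_card_sub_le _ k,
    expect_sum_abs_single_sub hk⟩

end Field

/-- **Theorem 1(ii).** For `m ≥ 2` and `n > 0`, with `k^DE = (n/m, …, n/m)` the uniform
allocation and `k^(t)` the single allocations (`n` in position `t`, else `0`), every
allocation vector `k*` satisfies
`0 ≤ ‖k^DE − k*‖₁ ≤ (1/m) ∑_t ‖k^(t) − k*‖₁ = 2n − 2n/m`. -/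
theorem kDE_dist_le_expected_single_dist
    (m : ℕ) (hm : 2 ≤ m) (n : ℝ) (hn : 0 < n)
    (kstar : Fin m → ℝ) (hkstar : ∀ s, 0 ≤ kstar s) (hkstarsum : ∑ s, kstar s = n) :
    0 ≤ ∑ t : Fin m, |n / m - kstar t| ∧
    ∑ t : Fin m, |n / m - kstar t|
      ≤ (1 / m) * ∑ t : Fin m, ∑ s : Fin m, |(if s = t then n else 0) - kstar s| ∧
    (1 / m) * ∑ t : Fin m, ∑ s : Fin m, |(if s = t then n else 0) - kstar s|
      = 2 * n - 2 * (n / m) := by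
  have : Nonempty (Fin m) := ⟨0, by omega⟩
  simpa only [Fintype.card_fin, Fintype.expect_eq_sum_div_card, Pi.single_apply,
    one_div_mul_eq_div] using kDE_dist_le_expected_single_dist_general hkstar hkstarsum
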